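/- Given a finite Markov decision process, for every value function V : S → ℝ and every β > 0, the sup-norm distance between the DBS Bellman update and the max Bellman update satisfies ‖T_β V − T_m V‖∞ ≤ log(|A|)/β, where |A| is the number of actions. -/

import Mathlib

/-!
The gap is controlled state by state. For `x : A → ℝ` with maximum `M` and `n = |A|`, the Boltzmann
average is a weighted mean of the `x a`, hence at most `M`. For the lower bound, the inequality
`t + 1 ≤ exp t` at `t = β * (M - x a) - log n`, multiplied by `exp (β * x a)`, gives
`exp (β * x a) * (β * (M - x a) - log n + 1) ≤ exp (β * M) / n`.
Summed over `a`, the right side is `exp (β * M)`, which is one term of the partition function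
`Z = ∑ a, exp (β * x a)`. Cancelling `Z` leaves `β * (M - boltz β x) ≤ log n`.
-/

noncomputable def boltz {ι : Type*} [Fintype ι] (β : ℝ) (x : ι → ℝ) : ℝ :=
  (∑ i, Real.exp (β * x i) * x i) / ∑ i, Real.exp (β * x i)

noncomputable def fmax {ι : Type*} [Fintype ι] [Nonempty ι] (x : ι → ℝ) : ℝ :=
  Finset.univ.sup' Finset.univ_nonempty x

noncomputable def fmin {ι : Type*} [Fintype ι] [Nonempty ι] (x : ι → ℝ) : ℝ :=
  Finset.univ.inf' Finset.univ_nonempty x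

noncomputable def Qval {S A : Type*} [Fintype S] (p : S → A → S → ℝ) (r : S → A → ℝ)
    (γ : ℝ) (V : S → ℝ) (s : S) (a : A) : ℝ :=
  r s a + γ * ∑ s', p s a s' * V s'

noncomputable def Tm {S A : Type*} [Fintype S] [Fintype A] [Nonempty A]
    (p : S → A → S → ℝ) (r : S → A → ℝ) (γ : ℝ) (V : S → ℝ) (s : S) : ℝ :=
  fmax (Qval p r γ V s)

noncomputable def Tb {S A : Type*} [Fintype S] [Fintype A]
    (p : S → A → S → ℝ) (r : S → A → ℝ) (γ : ℝ) (β : ℝ) (V : S → ℝ) (s : S) : ℝ :=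
  boltz β (Qval p r γ V s)

noncomputable def supNorm {S : Type*} [Fintype S] [Nonempty S] (V : S → ℝ) : ℝ :=
  fmax (fun s => |V s|)

lemma le_fmax {ι : Type*} [Fintype ι] [Nonempty ι] (x : ι → ℝ) (i : ι) : x i ≤ fmax x :=
  Finset.le_sup' x (Finset.mem_univ i)

lemma sum_exp_pos {ι : Type*} [Fintype ι] [Nonempty ι] (β : ℝ) (x : ι → ℝ) :
    0 < ∑ i, Real.exp (β * x i) :=
  Finset.sum_pos (fun _ _ => Real.exp_pos _) Finset.univ_nonempty

lemma boltz_le_fmax {ι : Type*} [Fintype ι] [Nonempty ι] (β : ℝ) (x : ι → ℝ) :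
    boltz β x ≤ fmax x := by
  unfold boltz
  rw [div_le_iff₀ (sum_exp_pos β x), Finset.mul_sum]
  refine Finset.sum_le_sum fun i _ => ?_
  rw [mul_comm]
  exact mul_le_mul_of_nonneg_right (le_fmax x i) (Real.exp_pos _).le

/-- The entropy-type estimate behind the theorem: the Boltzmann average falls short of the maximum
by at most `log |ι| / β`. -/
lemma fmax_sub_boltz_le {ι : Type*} [Fintype ι] [Nonempty ι] {β : ℝ} (hβ : 0 < β) (x : ι → ℝ) :
    fmax x - boltz β x ≤ Real.log (Fintype.card ι) / β := by
  have hn : (0 : ℝ) < Fintype.card ι := by exact_mod_cast Fintype.card_pos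
  have hZ := sum_exp_pos β x
  obtain ⟨j, -, hj⟩ := Finset.exists_mem_eq_sup' (Finset.univ_nonempty (α := ι)) x
  have hMZ : Real.exp (β * fmax x) ≤ ∑ i, Real.exp (β * x i) := by
    have hM : fmax x = x j := hj
    rw [hM]
    exact Finset.single_le_sum (f := fun i => Real.exp (β * x i))
      (fun i _ => (Real.exp_pos _).le) (Finset.mem_univ j)
  have hterm : ∀ i, Real.exp (β * x i) *
      (β * (fmax x - x i) - Real.log (Fintype.card ι) + 1)
        ≤ Real.exp (β * fmax x) / Fintype.card ι := by
    intro i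
    calc _ ≤ Real.exp (β * x i) *
          Real.exp (β * (fmax x - x i) - Real.log (Fintype.card ι)) :=
          mul_le_mul_of_nonneg_left (Real.add_one_le_exp _) (Real.exp_pos _).le
      _ = Real.exp (β * fmax x - Real.log (Fintype.card ι)) := by
          rw [← Real.exp_add]; congr 1; ring
      _ = _ := by rw [Real.exp_sub, Real.exp_log hn]
  have hsum := Finset.sum_le_sum fun i (_ : i ∈ Finset.univ) => hterm i
  have hright : ∑ _i : ι, Real.exp (β * fmax x) / Fintype.card ι = Real.exp (β * fmax x) := by
    rw [Finset.sum_const, Finset.card_univ, nsmul_eq_mul]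
    field_simp
  have hleft : ∑ i, Real.exp (β * x i) * (β * (fmax x - x i) - Real.log (Fintype.card ι) + 1)
      = (∑ i, Real.exp (β * x i)) * (β * fmax x - Real.log (Fintype.card ι) + 1)
        - β * ∑ i, Real.exp (β * x i) * x i := by
    rw [Finset.sum_mul, Finset.mul_sum, ← Finset.sum_sub_distrib]
    exact Finset.sum_congr rfl fun i _ => by ring
  have hb : ∑ i, Real.exp (β * x i) * x i = boltz β x * ∑ i, Real.exp (β * x i) := by
    unfold boltz
    rw [div_mul_cancel₀ _ hZ.ne']
  rw [hleft, hright, hb] at hsum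
  rw [le_div_iff₀ hβ]
  refine le_of_sub_nonpos (nonpos_of_mul_nonpos_right ?_ hZ)
  linarith

theorem dbs_bellman_gap {S A : Type*} [Fintype S] [Fintype A] [Nonempty S] [Nonempty A]
    (p : S → A → S → ℝ) (hp0 : ∀ s a s', 0 ≤ p s a s') (hp1 : ∀ s a, ∑ s', p s a s' = 1)
    (r : S → A → ℝ) (γ : ℝ) (hγ0 : 0 ≤ γ) (hγ1 : γ < 1)
    (V : S → ℝ) (β : ℝ) (hβ : 0 < β) :
    supNorm (fun s => Tb p r γ β V s - Tm p r γ V s) ≤ Real.log (Fintype.card A) / β := by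
  unfold supNorm fmax
  refine Finset.sup'_le _ _ fun s _ => ?_
  have h1 := boltz_le_fmax β (Qval p r γ V s)
  have h2 := fmax_sub_boltz_le hβ (Qval p r γ V s)
  simp only [Tb, Tm]
  rw [abs_sub_comm, abs_of_nonneg (sub_nonneg.mpr h1)]
  exact h2
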